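/- Let n = 3, s = 1, β(x) = (1+x)^{-1}, and p_{ij} = 1/6 for all i ≠ j. Let Y(t) = (y_1(t), y_2(t), y_3(t)) be the solution of the gradient flow of the relative entropy with initial data y_1(0) = 1, y_2(0) = 0, y_3(0) = −1. Then there exists a constant C > 0 such that diam Y(t) ≤ C t^{−1/2} for all t ≥ 1; in particular diam Y(t) → 0 as t → ∞. -/

import Mathlib

open Filter Topology

/-- The normalizing constant `Z = Σ_{k ≠ ℓ} β(|y_k - y_ℓ|²)`. -/
noncomputable def pairZ {E : Type*} [NormedAddCommGroup E] (β : ℝ → ℝ) {n : ℕ}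
    (Y : Fin n → E) : ℝ :=
  ∑ k : Fin n, ∑ l : Fin n, if k ≠ l then β (‖Y k - Y l‖ ^ 2) else 0

/-- The low-dimensional similarity `q_{ij}(Y) = β(|y_i - y_j|²) / Z(Y)`. -/
noncomputable def qfun {E : Type*} [NormedAddCommGroup E] (β : ℝ → ℝ) {n : ℕ}
    (Y : Fin n → E) (i j : Fin n) : ℝ :=
  β (‖Y i - Y j‖ ^ 2) / pairZ β Y

/-- The derivative `(log β)'` on `[0, ∞)`. -/
noncomputable def lbd (β : ℝ → ℝ) : ℝ → ℝ :=
  fun x => derivWithin (fun y => Real.log (β y)) (Set.Ici 0) x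

/-- `Y : ℝ → Fin n → E` is a solution of the gradient flow of the relative entropy:
`dy_i/dt = 4 Σ_{j ≠ i} (p_{ij} - q_{ij}(Y)) (y_i - y_j) (log β)'(|y_i - y_j|²)` for `t ≥ 0`. -/
def IsGradFlow {E : Type*} [NormedAddCommGroup E] [NormedSpace ℝ E] (β : ℝ → ℝ) {n : ℕ}
    (p : Fin n → Fin n → ℝ) (Y : ℝ → Fin n → E) : Prop :=
  ∀ i : Fin n, ∀ t ∈ Set.Ici (0 : ℝ),
    HasDerivWithinAt (fun u => Y u i)
      (∑ j ∈ Finset.univ.filter (· ≠ i),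
        (4 * (p i j - qfun β (Y t) i j) * lbd β (‖Y t i - Y t j‖ ^ 2)) • (Y t i - Y t j))
      (Set.Ici 0) t

/-- The diameter of the configuration `Y`, i.e. `max_{i,j} |y_i - y_j|`. -/
noncomputable def diamY {E : Type*} [NormedAddCommGroup E] {n : ℕ} (Y : Fin n → E) : ℝ :=
  Metric.diam (Set.range Y)

lemma aux_lbd (x : ℝ) (hx : 0 ≤ x) : lbd (fun x : ℝ => (1 + x)⁻¹) x = -(1 + x)⁻¹ := by
  unfold lbd
  have h1 : HasDerivAt (fun y : ℝ => Real.log ((1 + y)⁻¹)) (-(1 + x)⁻¹) x := by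
    have h2 : HasDerivAt (fun y : ℝ => 1 + y) 1 x := (hasDerivAt_id x).const_add 1
    have h3 := (h2.log (by positivity)).neg
    have h4 : (fun y : ℝ => Real.log ((1 + y)⁻¹)) = -(fun y : ℝ => Real.log (1 + y)) := by
      funext y; simp [Real.log_inv]
    rw [h4]
    exact h3.congr_deriv (by rw [one_div])
  exact h1.hasDerivWithinAt.derivWithin (uniqueDiffOn_Ici 0 x hx)

lemma aux_pairZ (Y : Fin 3 → ℝ) : pairZ (fun x : ℝ => (1 + x)⁻¹) Y =
    2 * ((1 + (Y 0 - Y 1) ^ 2)⁻¹ + (1 + (Y 1 - Y 2) ^ 2)⁻¹ + (1 + (Y 0 - Y 2) ^ 2)⁻¹) := by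
  unfold pairZ
  simp [Fin.sum_univ_three]
  rw [show (Y 1 - Y 0) ^ 2 = (Y 0 - Y 1) ^ 2 by ring, show (Y 2 - Y 0) ^ 2 = (Y 0 - Y 2) ^ 2 by ring,
    show (Y 2 - Y 1) ^ 2 = (Y 1 - Y 2) ^ 2 by ring]
  ring

/-- derivative of `a - b`. -/
lemma aux_wbound (a b Z : ℝ)
    (hZ : Z ≥ 2 * ((1 + a ^ 2)⁻¹ + (1 + b ^ 2)⁻¹)) :
    (a - b) * (12 * (((1 + a ^ 2)⁻¹ / Z - 1 / 6) * (1 + a ^ 2)⁻¹ * a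
      - ((1 + b ^ 2)⁻¹ / Z - 1 / 6) * (1 + b ^ 2)⁻¹ * b)) ≤ 20 * (a - b) ^ 2 := by
  have hA : 0 < 1 + a ^ 2 := by positivity
  have hB : 0 < 1 + b ^ 2 := by positivity
  have hS : 0 < 2 + a ^ 2 + b ^ 2 := by positivity
  have hZ0 : 0 < Z := lt_of_lt_of_le (by positivity) hZ
  have hZ1 : 2 * (2 + a ^ 2 + b ^ 2) ≤ Z * ((1 + a ^ 2) * (1 + b ^ 2)) := by
    have := mul_le_mul_of_nonneg_right hZ (mul_pos hA hB).le
    refine le_trans (le_of_eq ?_) this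
    field_simp
    ring
  set D := (1 + a ^ 2) * (1 + b ^ 2) with hD
  have hD0 : 0 < D := mul_pos hA hB
  have e : (a - b) * (12 * (((1 + a ^ 2)⁻¹ / Z - 1 / 6) * (1 + a ^ 2)⁻¹ * a
      - ((1 + b ^ 2)⁻¹ / Z - 1 / 6) * (1 + b ^ 2)⁻¹ * b)) =
      (a - b) ^ 2 * (12 * (1 - 2 * (a * b) - a * b * (a ^ 2 + a * b + b ^ 2)) / (Z * D * D)
        - 2 * (1 - a * b) / D) := by
    rw [hD]
    field_simp
    ring
  rw [e, mul_comm]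
  refine mul_le_mul_of_nonneg_right ?_ (sq_nonneg _)
  have hab : |a * b| ≤ (a ^ 2 + b ^ 2) / 2 := by
    rw [abs_le]; constructor <;> nlinarith [sq_nonneg (a - b), sq_nonneg (a + b)]
  have hab' := abs_le.1 hab
  have h1 : 12 * (1 - 2 * (a * b) - a * b * (a ^ 2 + a * b + b ^ 2)) / (Z * D * D) ≤ 18 := by
    rw [div_le_iff₀ (by positivity)]
    have h3 : 2 * (2 + a ^ 2 + b ^ 2) * D ≤ Z * D * D := mul_le_mul_of_nonneg_right hZ1 hD0.le
    have h4 : 1 - 2 * (a * b) - a * b * (a ^ 2 + a * b + b ^ 2) ≤ 2 * (2 + a ^ 2 + b ^ 2) * D := by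
      have h5 : D = 1 + a ^ 2 + b ^ 2 + (a * b) ^ 2 := by rw [hD]; ring
      have h6 : - (a * b * (a ^ 2 + b ^ 2)) ≤ (a ^ 2 + b ^ 2) / 2 * (a ^ 2 + b ^ 2) := by
        have := mul_le_mul_of_nonneg_right (show -(a*b) ≤ (a ^ 2 + b ^ 2) / 2 by linarith) (show 0 ≤ a ^ 2 + b ^ 2 by positivity)
        linarith
      rw [h5]
      nlinarith [sq_nonneg (a * b), sq_nonneg a, sq_nonneg b, mul_nonneg (sq_nonneg (a*b)) (add_nonneg (sq_nonneg a) (sq_nonneg b)), sq_nonneg (a^2+b^2)]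
    have h7 : 0 < Z * D * D := by positivity
    linarith
  have h2 : - (2 * (1 - a * b) / D) ≤ 2 := by
    rw [← neg_div, div_le_iff₀ hD0]
    have h5 : D = 1 + a ^ 2 + b ^ 2 + (a * b) ^ 2 := by rw [hD]; ring
    rw [h5]
    nlinarith [sq_nonneg (a * b)]
  linarith

lemma aux_anti (f f' : ℝ → ℝ) (T : Set ℝ) (hT : Convex ℝ T)
    (hf : ∀ t ∈ T, HasDerivWithinAt f (f' t) T t) (h : ∀ t ∈ T, f' t ≤ 0) : AntitoneOn f T := by
  refine antitoneOn_of_hasDerivWithinAt_nonpos (f' := f') hT (fun t ht => (hf t ht).continuousWithinAt)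
    (fun t ht => (hf t (interior_subset ht)).mono interior_subset)
    (fun t ht => h t (interior_subset ht))

lemma aux_gron (w w' : ℝ → ℝ) (h0 : w 0 = 0)
    (hd : ∀ t, 0 ≤ t → HasDerivWithinAt w (w' t) (Set.Ici 0) t)
    (hw : ∀ t, 0 ≤ t → w t * w' t ≤ 20 * w t ^ 2) (t : ℝ) (ht : 0 ≤ t) : w t = 0 := by
  have key : AntitoneOn (fun s => w s ^ 2 * Real.exp (-40 * s)) (Set.Ici 0) := by
    refine aux_anti _ (fun s => (2 * w s * w' s) * Real.exp (-40 * s)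
      + w s ^ 2 * (Real.exp (-40 * s) * (-40 * 1))) _ (convex_Ici 0) (fun s hs => ?_) (fun s hs => ?_)
    · have hE : HasDerivAt (fun s : ℝ => Real.exp (-40 * s)) (Real.exp (-40 * s) * (-40 * 1)) s :=
        ((hasDerivAt_id s).const_mul (-40)).exp
      refine (((hd s hs).pow 2).mul hE.hasDerivWithinAt).congr_deriv ?_
      simp
    · have := mul_le_mul_of_nonneg_right (hw s hs) (Real.exp_pos (-40 * s)).le
      linarith
  have h := key (Set.mem_Ici.2 le_rfl) ht ht
  simp only [h0] at h
  have hp := Real.exp_pos (-40 * t)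
  by_contra hc
  have : 0 < w t ^ 2 * Real.exp (-40 * t) := by positivity
  linarith

lemma aux_flow (Y : ℝ → Fin 3 → ℝ) (p : Fin 3 → Fin 3 → ℝ) (hp : ∀ i j, i ≠ j → p i j = 1 / 6)
    (hflow : IsGradFlow (fun x : ℝ => (1 + x)⁻¹) p Y) (t : ℝ) (ht : 0 ≤ t) (a b Z : ℝ)
    (ha : a = Y t 0 - Y t 1) (hb : b = Y t 1 - Y t 2)
    (hZ : Z = 2 * ((1 + a ^ 2)⁻¹ + (1 + b ^ 2)⁻¹ + (1 + (a + b) ^ 2)⁻¹)) :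
    HasDerivWithinAt (fun u => Y u 0 - Y u 1)
      (4 * (2 * (((1 + a ^ 2)⁻¹ / Z - 1 / 6) * (1 + a ^ 2)⁻¹ * a)
        + ((1 + (a + b) ^ 2)⁻¹ / Z - 1 / 6) * (1 + (a + b) ^ 2)⁻¹ * (a + b)
        - ((1 + b ^ 2)⁻¹ / Z - 1 / 6) * (1 + b ^ 2)⁻¹ * b)) (Set.Ici 0) t ∧
    HasDerivWithinAt (fun u => Y u 1 - Y u 2)
      (4 * (2 * (((1 + b ^ 2)⁻¹ / Z - 1 / 6) * (1 + b ^ 2)⁻¹ * b)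
        + ((1 + (a + b) ^ 2)⁻¹ / Z - 1 / 6) * (1 + (a + b) ^ 2)⁻¹ * (a + b)
        - ((1 + a ^ 2)⁻¹ / Z - 1 / 6) * (1 + a ^ 2)⁻¹ * a)) (Set.Ici 0) t := by
  have hs0 : Finset.univ.filter (· ≠ (0 : Fin 3)) = {1, 2} := by decide
  have hs1 : Finset.univ.filter (· ≠ (1 : Fin 3)) = {0, 2} := by decide
  have hs2 : Finset.univ.filter (· ≠ (2 : Fin 3)) = {0, 1} := by decide
  have h0 := hflow 0 t ht
  have h1 := hflow 1 t ht
  have h2 := hflow 2 t ht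
  rw [hs0, Finset.sum_pair (by decide)] at h0
  rw [hs1, Finset.sum_pair (by decide)] at h1
  rw [hs2, Finset.sum_pair (by decide)] at h2
  have hab : a + b = Y t 0 - Y t 2 := by rw [ha, hb]; ring
  have hZ' : pairZ (fun x : ℝ => (1 + x)⁻¹) (Y t) = Z := by
    rw [aux_pairZ, hZ, hab, ha, hb]
  simp only [qfun, hZ', aux_lbd _ (sq_nonneg _), Real.norm_eq_abs, sq_abs, smul_eq_mul,
    hp 0 1 (by decide), hp 0 2 (by decide), hp 1 0 (by decide), hp 1 2 (by decide),
    hp 2 0 (by decide), hp 2 1 (by decide)] at h0 h1 h2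
  rw [show Y t 1 - Y t 0 = -a by rw [ha]; ring, ← hb] at h1
  rw [show Y t 2 - Y t 0 = -(a+b) by rw [hab]; ring, show Y t 2 - Y t 1 = -b by rw [hb]; ring] at h2
  rw [← ha, ← hab] at h0
  simp only [neg_sq] at h0 h1 h2
  constructor
  · refine (h0.sub h1).congr_deriv ?_
    ring
  · refine (h1.sub h2).congr_deriv ?_
    ring

lemma aux_decay (v v' : ℝ → ℝ) (h0 : v 0 = 1) (hv : ∀ t, 0 ≤ t → 0 ≤ v t)
    (hd : ∀ t, 0 ≤ t → HasDerivWithinAt v (v' t) (Set.Ici 0) t)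
    (hv' : ∀ t, 0 ≤ t → v' t = -4 * v t ^ 2 / ((1 + 3 * v t) * (1 + v t) * (1 + 4 * v t)))
    (t : ℝ) (ht : 0 < t) : v t ≤ 10 / t := by
  have anti : AntitoneOn v (Set.Ici 0) := by
    refine aux_anti v v' _ (convex_Ici 0) (fun t ht => hd t ht) (fun t ht => ?_)
    rw [hv' t ht]
    have := hv t ht
    refine div_nonpos_of_nonpos_of_nonneg (by nlinarith [sq_nonneg (v t)]) (by positivity)
  rcases (hv t ht.le).eq_or_lt with h | h
  · rw [← h]; positivity
  have hpos : ∀ s ∈ Set.Icc 0 t, 0 < v s := fun s hs =>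
    lt_of_lt_of_le h (anti hs.1 ht.le hs.2)
  have hle : ∀ s ∈ Set.Icc 0 t, v s ≤ 1 := fun s hs => by
    rw [← h0]; exact anti (Set.mem_Ici.2 le_rfl) hs.1 hs.1
  have key : AntitoneOn (fun s => s / 10 - (v s)⁻¹) (Set.Icc 0 t) := by
    refine aux_anti _ (fun s => 1 / 10 - (-v' s / v s ^ 2)) _ (convex_Icc 0 t) ?_ ?_
    · intro s hs
      exact ((hasDerivWithinAt_id s _).div_const 10).sub
        (((hd s hs.1).mono (fun x hx => hx.1)).inv (hpos s hs).ne')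
    · intro s hs
      have p := hpos s hs
      have q := hle s hs
      have e : -v' s / v s ^ 2 = 4 / ((1 + 3 * v s) * (1 + v s) * (1 + 4 * v s)) := by
        rw [hv' s hs.1]; field_simp
      simp only [e]
      rw [sub_nonpos, div_le_div_iff₀ (by norm_num) (by positivity)]
      have : (1 + 3 * v s) * (1 + v s) ≤ 4 * 2 := by gcongr <;> linarith
      have : (1 + 3 * v s) * (1 + v s) * (1 + 4 * v s) ≤ 4 * 2 * 5 := by gcongr; linarith
      linarith
  have := key ⟨le_rfl, ht.le⟩ ⟨ht.le, le_rfl⟩ ht.le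
  simp only [h0] at this
  have h5 : t / 10 ≤ (v t)⁻¹ := by norm_num at this; linarith
  rw [le_div_iff₀ ht]
  have := mul_le_mul_of_nonneg_left h5 h.le
  rw [mul_inv_cancel₀ h.ne'] at this
  linarith

/-- **Example 4.1 (t-SNE case).** For `n = 3` points in `ℝ`, `β(x) = (1+x)⁻¹`, uniform
probabilities `p_{ij} = 1/6`, and initial data `(1, 0, -1)`, the solution of the gradient
flow satisfies `diam Y(t) ≤ C t^{-1/2}` for `t ≥ 1`; in particular `diam Y(t) → 0`. -/
theorem collapse_example_tsne
    (β : ℝ → ℝ) (hβ : β = fun x => (1 + x)⁻¹)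
    (p : Fin 3 → Fin 3 → ℝ) (hp : ∀ i j, i ≠ j → p i j = 1 / 6)
    (Y : ℝ → Fin 3 → ℝ)
    (hflow : IsGradFlow β p Y)
    (hY0 : Y 0 = ![1, 0, -1]) :
    (∃ C : ℝ, 0 < C ∧ ∀ t : ℝ, 1 ≤ t → diamY (Y t) ≤ C * t ^ (-(1 : ℝ) / 2)) ∧
      Tendsto (fun t => diamY (Y t)) atTop (𝓝 0) := by
  subst hβ
  have F := fun t ht => aux_flow Y p hp hflow t ht _ _ _ rfl rfl rfl
  -- symmetry
  have hsym : ∀ t, 0 ≤ t → Y t 0 - Y t 1 = Y t 1 - Y t 2 := by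
    intro t ht
    have h := aux_gron (fun s => (Y s 0 - Y s 1) - (Y s 1 - Y s 2)) _ (by simp [hY0])
      (fun s hs => (F s hs).1.sub (F s hs).2) (fun s hs => ?_) t ht
    · skip
      linarith
    · have hw := aux_wbound (Y s 0 - Y s 1) (Y s 1 - Y s 2)
        (2 * ((1 + (Y s 0 - Y s 1) ^ 2)⁻¹ + (1 + (Y s 1 - Y s 2) ^ 2)⁻¹
          + (1 + ((Y s 0 - Y s 1) + (Y s 1 - Y s 2)) ^ 2)⁻¹)) (by
          have : (0:ℝ) ≤ (1 + ((Y s 0 - Y s 1) + (Y s 1 - Y s 2)) ^ 2)⁻¹ := by positivity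
          linarith)
      refine le_trans (le_of_eq ?_) hw
      ring
  have hv : ∀ t, 0 < t → (Y t 0 - Y t 1) ^ 2 ≤ 10 / t := by
    refine aux_decay (fun t => (Y t 0 - Y t 1) ^ 2) _ (by simp [hY0]) (fun t _ => sq_nonneg _)
      (fun t ht => (F t ht).1.pow 2) ?_
    intro t ht
    rw [← hsym t ht]
    generalize Y t 0 - Y t 1 = a
    have h1 : 0 < 1 + 3 * a ^ 2 := by positivity
    have h2 : 0 < 1 + a ^ 2 := by positivity
    have h3 : 0 < 1 + 4 * a ^ 2 := by positivity
    have e1 : 1 + (a + a) ^ 2 = 1 + 4 * a ^ 2 := by ring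
    rw [e1]
    have e2 : 2 * ((1 + a ^ 2)⁻¹ + (1 + a ^ 2)⁻¹ + (1 + 4 * a ^ 2)⁻¹) =
      6 * (1 + 3 * a ^ 2) / ((1 + a ^ 2) * (1 + 4 * a ^ 2)) := by
      field_simp; ring
    rw [e2]
    field_simp
    norm_num
    ring
  have hdiam : ∀ t : ℝ, 1 ≤ t → diamY (Y t) ≤ 7 * t ^ (-(1 : ℝ) / 2) := by
    intro t ht
    have ht0 : 0 < t := by linarith
    have hs := hsym t ht0.le
    have h1 : |Y t 0 - Y t 1| ≤ 7 / 2 * t ^ (-(1 : ℝ) / 2) := by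
      have hr : (t ^ (-(1 : ℝ) / 2)) ^ 2 = 1 / t := by
        rw [← Real.rpow_natCast, ← Real.rpow_mul ht0.le]
        norm_num [Real.rpow_neg_one]
      refine abs_le_of_sq_le_sq ?_ (by positivity)
      rw [mul_pow, hr]
      refine (hv t ht0).trans ?_
      rw [mul_one_div]
      gcongr
      norm_num
    refine Metric.diam_le_of_forall_dist_le (by positivity) ?_
    rintro _ ⟨i, rfl⟩ _ ⟨j, rfl⟩
    rw [Real.dist_eq, abs_le]
    have := abs_le.1 h1
    have hr0 : 0 ≤ t ^ (-(1 : ℝ) / 2) := by positivity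
    fin_cases i <;> fin_cases j <;> dsimp <;> constructor <;> linarith
  refine ⟨⟨7, by norm_num, hdiam⟩, ?_⟩
  refine squeeze_zero' (Eventually.of_forall fun t => Metric.diam_nonneg)
    ((eventually_ge_atTop 1).mono hdiam) ?_
  have := (tendsto_rpow_neg_atTop (show (0:ℝ) < 1 / 2 by norm_num)).const_mul 7
  simpa [neg_div] using this
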